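/- Let 0 < α < 1 and define the Grünwald weights w_k = (-1)^k · C(α, k). Let E ≥ 0, and let (e_n)_{n≥1} be a sequence of non-negative real numbers such that for every n ≥ 1, e_n ≤ − Σ_{k=1}^{n-1} w_k · e_{n-k} + B_n, where the non-negative numbers B_n satisfy B_n ≤ (Σ_{k=0}^{n-1} w_k) · E for all n ≥ 1. Then e_n ≤ E for every n ≥ 1. -/

import Mathlib

/-- The Grünwald weights `w_k = (-1)^k C(α, k)`, where
`C(α, k) = α(α-1)⋯(α-k+1)/k!` is the generalized binomial coefficient. -/
noncomputable def grunwaldWeight (α : ℝ) (k : ℕ) : ℝ :=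
  (-1 : ℝ) ^ k * ((∏ i ∈ Finset.range k, (α - i)) / (k.factorial : ℝ))

/-!
Moving the sum to the left-hand side, the recursion says that the convolution of the weights `w`
with `e` is at most the convolution of `w` with the constant sequence `E`. Since `w₀ > 0` while all
the other weights are nonpositive, a strong induction lets one cancel `w`: if `e` is bounded by `E`
before `n`, the terms of index `k ≥ 1` compare in the opposite direction, so those of index `0`
must satisfy `w₀ e_n ≤ w₀ E`.
-/

open Finset

theorem sum_range_eq_add_sum_Icc {M : Type*} [AddCommMonoid M] (f : ℕ → M) {n : ℕ} (hn : 1 ≤ n) :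
    ∑ k ∈ range n, f k = f 0 + ∑ k ∈ Icc 1 (n - 1), f k := by
  have Icc_eq_Ico : Icc 1 (n - 1) = Ico 1 n := by grind
  rw [sum_range_eq_add_Ico f hn, Icc_eq_Ico]

section Convolution

variable {R M : Type*} [Ring R] [PartialOrder R] [IsOrderedRing R]
  [AddCommGroup M] [PartialOrder M] [IsOrderedAddMonoid M]
  [Module R M] [PosSMulMono R M] [PosSMulReflectLE R M]

theorem le_of_sum_range_smul_le_sum_range_smul {w : ℕ → R} {u v : ℕ → M}
    (hw_zero : 0 < w 0) (hw_nonpos : ∀ k, 1 ≤ k → w k ≤ 0)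
    (huv : ∀ n, 1 ≤ n → ∑ k ∈ range n, w k • u (n - k) ≤ ∑ k ∈ range n, w k • v (n - k))
    (n : ℕ) (hn : 1 ≤ n) : u n ≤ v n := by
  induction n using Nat.strong_induction_on with
  | _ n ih =>
    have tail_le :
        ∑ k ∈ Icc 1 (n - 1), w k • v (n - k) ≤ ∑ k ∈ Icc 1 (n - 1), w k • u (n - k) := by
      refine sum_le_sum fun k hk ↦ ?_
      obtain ⟨one_le_k, k_le⟩ := mem_Icc.mp hk
      exact smul_le_smul_of_nonpos_left (ih (n - k) (by lia) (by lia)) (hw_nonpos k one_le_k)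
    have sum_le := huv n hn
    simp only [sum_range_eq_add_sum_Icc _ hn, Nat.sub_zero] at sum_le
    have head_le : w 0 • u n ≤ w 0 • v n :=
      le_of_add_le_add_right (sum_le.trans (add_le_add le_rfl tail_le))
    exact le_of_smul_le_smul_left head_le hw_zero

end Convolution

theorem grunwaldWeight_zero (α : ℝ) : grunwaldWeight α 0 = 1 := by
  simp [grunwaldWeight]

theorem grunwaldWeight_succ (α : ℝ) (k : ℕ) :
    grunwaldWeight α (k + 1) = grunwaldWeight α k * ((k - α) / (k + 1)) := by
  simp only [grunwaldWeight, prod_range_succ, Nat.factorial_succ, pow_succ]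
  push_cast
  field_simp
  ring

theorem grunwaldWeight_nonpos {α : ℝ} (hα0 : 0 ≤ α) (hα1 : α ≤ 1) (k : ℕ) (hk : 1 ≤ k) :
    grunwaldWeight α k ≤ 0 := by
  induction k, hk using Nat.le_induction with
  | base => simpa [grunwaldWeight] using hα0
  | succ k hk ih =>
    have hαk : α ≤ k := hα1.trans (by exact_mod_cast hk)
    rw [grunwaldWeight_succ]
    exact mul_nonpos_of_nonpos_of_nonneg ih (div_nonneg (sub_nonneg.mpr hαk) (by positivity))

theorem grunwald_error_recursion_bound_general {M : Type*} [AddCommGroup M] [PartialOrder M]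
    [IsOrderedAddMonoid M] [Module ℝ M] [PosSMulMono ℝ M]
    {α : ℝ} (hα0 : 0 ≤ α) (hα1 : α ≤ 1) {E : M} {e B : ℕ → M}
    (hrec : ∀ n, 1 ≤ n → e n ≤ -(∑ k ∈ Icc 1 (n - 1), grunwaldWeight α k • e (n - k)) + B n)
    (hB : ∀ n, 1 ≤ n → B n ≤ (∑ k ∈ range n, grunwaldWeight α k) • E) (n : ℕ) (hn : 1 ≤ n) :
    e n ≤ E := by
  refine le_of_sum_range_smul_le_sum_range_smul (v := fun _ ↦ E)
    (one_pos.trans_eq (grunwaldWeight_zero α).symm) (grunwaldWeight_nonpos hα0 hα1)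
    (fun m hm ↦ ?_) n hn
  calc
    ∑ k ∈ range m, grunwaldWeight α k • e (m - k)
      = ∑ k ∈ Icc 1 (m - 1), grunwaldWeight α k • e (m - k) + e m := by
        rw [sum_range_eq_add_sum_Icc _ hm, grunwaldWeight_zero, one_smul, Nat.sub_zero, add_comm]
    _ ≤ B m := le_neg_add_iff_add_le.mp (hrec m hm)
    _ ≤ (∑ k ∈ range m, grunwaldWeight α k) • E := hB m hm
    _ = ∑ k ∈ range m, grunwaldWeight α k • E := sum_smul

/-- Discrete error bound: if `(e_n)_{n≥1}` is non-negative and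
satisfies `e_n ≤ -Σ_{k=1}^{n-1} w_k e_{n-k} + B_n` with `0 ≤ B_n ≤ (Σ_{k=0}^{n-1} w_k) E`
for all `n ≥ 1`, then `e_n ≤ E` for all `n ≥ 1`. -/
theorem grunwald_error_recursion_bound
    (α : ℝ) (hα0 : 0 < α) (hα1 : α < 1)
    (E : ℝ) (hE : 0 ≤ E)
    (e B : ℕ → ℝ)
    (he_nonneg : ∀ n : ℕ, 1 ≤ n → 0 ≤ e n)
    (hB_nonneg : ∀ n : ℕ, 1 ≤ n → 0 ≤ B n)
    (hrec : ∀ n : ℕ, 1 ≤ n →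
      e n ≤ -(∑ k ∈ Finset.Icc 1 (n - 1), grunwaldWeight α k * e (n - k)) + B n)
    (hB : ∀ n : ℕ, 1 ≤ n → B n ≤ (∑ k ∈ Finset.range n, grunwaldWeight α k) * E) :
    ∀ n : ℕ, 1 ≤ n → e n ≤ E :=
  grunwald_error_recursion_bound_general hα0.le hα1.le hrec hB
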